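/- arXiv:1009.2022 — 2 statements merged into one kernel-verified Lean document; each statement's English description precedes it below -/
import Mathlib

section
/- Let ν ≥ 2 be an integer, p ∈ (0,1), and let L be the normalized linear-linear loss with parameters a, b ≥ 0, (a,b) ≠ (0,0). For the estimator p̂ = (ν−1)/(N−1) and m₀ = ⌊(ν−1)/p + 1⌋, the risk satisfies the identity R(p) = (a+b)(1−p) C(m₀−1, ν−1) p^{ν−1} (1−p)^{m₀−ν}. -/
/-!
Write `ν = k + 1`, `n = k + 1 + j`, `q = 1 - p` and `x = (k / (n - 1)) / p`. Since
`C(k+j, k) * k / (k+j) = C(k+j-1, k-1) = C(k+j, k) - C(k+j-1, k)`, the weighted relative error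
telescopes: `f_ν(n) * (1 - x) = G j - G (j + 1)` with `G j = C(k+j-1, k) * p^k * q^j`
(`pmf_mul_one_sub`). Here `G 0 = 0` and `G j → 0`. The loss is `b * (x - 1)` for `n ≤ m₀` and
`a * (1 - x)` for `n > m₀` (`linLinLoss_of_le`, `linLinLoss_of_ge`). With `J = m₀ - ν`, the first
range therefore contributes `b * G (J + 1)` and the second one `a * G (J + 1)`, and `G (J + 1)` is
`(1 - p) * C(m₀ - 1, ν - 1) * p^(ν-1) * (1 - p)^(m₀ - ν)`.
-/

open Real Filter Set

/-- Negative binomial probability function. -/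
noncomputable def negBinomPMF (ν : ℕ) (p : ℝ) (n : ℕ) : ℝ :=
  (Nat.choose (n - 1) (ν - 1) : ℝ) * p ^ ν * (1 - p) ^ (n - ν)

/-- Risk of the estimator `g` under loss `L` in inverse binomial sampling. -/
noncomputable def risk (ν : ℕ) (L : ℝ → ℝ) (g : ℕ → ℝ) (p : ℝ) : ℝ :=
  ∑' n : ℕ, if ν ≤ n then negBinomPMF ν p n * L (g n / p) else 0

/-- Normalized linear-linear loss. -/
noncomputable def linLinLoss (a b x : ℝ) : ℝ :=
  if x ≤ 1 then a * (1 - x) else b * (x - 1)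

/-- The telescoping potential `G j = C(k+j-1, k) * p^k * (1-p)^j`. For `k ≥ 1` it vanishes
at `j = 0`. -/
noncomputable def potential (k : ℕ) (p : ℝ) (j : ℕ) : ℝ :=
  (Nat.choose (k + j - 1) k : ℝ) * p ^ k * (1 - p) ^ j

lemma potential_zero {k : ℕ} (hk : 1 ≤ k) (p : ℝ) : potential k p 0 = 0 := by
  unfold potential
  rw [Nat.choose_eq_zero_of_lt (by omega)]
  simp

lemma potential_succ (k : ℕ) (p : ℝ) (j : ℕ) :
    potential k p (j + 1) = (Nat.choose (k + j) k : ℝ) * p ^ k * (1 - p) ^ (j + 1) := by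
  rfl

lemma tendsto_potential (k : ℕ) {p : ℝ} (hp : p ∈ Set.Ioo (0 : ℝ) 1) :
    Tendsto (potential k p) atTop (nhds 0) := by
  rw [← tendsto_add_atTop_iff_nat 1]
  have hq : ‖1 - p‖ < 1 := by
    rw [Real.norm_eq_abs, abs_lt]
    constructor <;> linarith [hp.1, hp.2]
  have h := (summable_choose_mul_geometric_of_norm_lt_one k hq).tendsto_atTop_zero
  have h2 := h.const_mul (p ^ k * (1 - p))
  rw [mul_zero] at h2
  refine h2.congr fun j => ?_
  rw [potential_succ, add_comm k j]
  ring

lemma pmf_mul_one_sub {k : ℕ} (hk : 1 ≤ k) {p : ℝ} (hp : p ≠ 0) (j : ℕ) :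
    negBinomPMF (k + 1) p (k + 1 + j) * (1 - (k : ℝ) / ((k : ℝ) + j) / p) =
      potential k p j - potential k p (j + 1) := by
  obtain ⟨i, rfl⟩ : ∃ i, k = i + 1 := ⟨k - 1, by omega⟩
  rw [potential_succ]
  unfold negBinomPMF potential
  have e1 : i + 1 + 1 + j - 1 = i + 1 + j := by omega
  have e2 : i + 1 + 1 + j - (i + 1 + 1) = j := by omega
  have e3 : i + 1 + j - 1 = i + j := by omega
  rw [e1, e2, e3, Nat.add_sub_cancel]
  have pascal : (Nat.choose (i + 1 + j) (i + 1) : ℝ) =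
      Nat.choose (i + j) i + Nat.choose (i + j) (i + 1) := by
    rw [show i + 1 + j = (i + j) + 1 by omega, Nat.choose_succ_succ]
    push_cast
    ring
  have absorb : ((i : ℝ) + 1 + j) * Nat.choose (i + j) i =
      Nat.choose (i + 1 + j) (i + 1) * ((i : ℝ) + 1) := by
    have h := Nat.add_one_mul_choose_eq (i + j) i
    rw [show i + j + 1 = i + 1 + j by omega] at h
    exact_mod_cast h
  have hpos : (i : ℝ) + 1 + j ≠ 0 := by positivity
  have hquot : (Nat.choose (i + 1 + j) (i + 1) : ℝ) * (((i : ℝ) + 1) / ((i : ℝ) + 1 + j)) =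
      Nat.choose (i + j) i := by
    rw [← mul_div_assoc, ← absorb]
    field_simp
  push_cast
  calc (Nat.choose (i + 1 + j) (i + 1) : ℝ) * p ^ (i + 1 + 1) * (1 - p) ^ j *
        (1 - ((i : ℝ) + 1) / ((i : ℝ) + 1 + j) / p)
      = p ^ (i + 1) * (1 - p) ^ j * (p * Nat.choose (i + 1 + j) (i + 1) -
          (Nat.choose (i + 1 + j) (i + 1) : ℝ) * (((i : ℝ) + 1) / ((i : ℝ) + 1 + j))) := by
        rw [pow_succ p (i + 1)]
        field_simp
    _ = _ := by
        rw [hquot, pow_succ (1 - p) j]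
        linear_combination (p ^ (i + 1) * (1 - p) ^ j) * pascal

lemma linLinLoss_of_le (a b : ℝ) {x : ℝ} (hx : x ≤ 1) : linLinLoss a b x = a * (1 - x) :=
  if_pos hx

/-- At `x = 1` both branches vanish, so the second branch is valid there as well. -/
lemma linLinLoss_of_ge (a b : ℝ) {x : ℝ} (hx : 1 ≤ x) : linLinLoss a b x = b * (x - 1) := by
  rcases hx.eq_or_lt with rfl | h
  · simp [linLinLoss]
  · exact if_neg (not_le.mpr h)

lemma linLinLoss_nonneg {a b : ℝ} (ha : 0 ≤ a) (hb : 0 ≤ b) (x : ℝ) : 0 ≤ linLinLoss a b x := by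
  unfold linLinLoss
  split_ifs with h
  · exact mul_nonneg ha (by linarith)
  · exact mul_nonneg hb (by linarith)

/-- The risk series in the index `j = n - ν`. The hypothesis `hJ` says that `j ≤ J` exactly when
the ratio of estimate to true value is at least `1`. -/
lemma hasSum_risk_terms {k : ℕ} (hk : 1 ≤ k) {a b : ℝ} (ha : 0 ≤ a) (hb : 0 ≤ b)
    {p : ℝ} (hp : p ∈ Set.Ioo (0 : ℝ) 1) {J : ℕ}
    (hJ : ∀ j : ℕ, j ≤ J ↔ ((k : ℝ) + j) * p ≤ k) :
    HasSum (fun j : ℕ => negBinomPMF (k + 1) p (k + 1 + j) *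
      linLinLoss a b ((k : ℝ) / ((k : ℝ) + j) / p)) ((a + b) * potential k p (J + 1)) := by
  have hp0 := hp.1
  have hk0 : (0 : ℝ) < k := by exact_mod_cast hk
  rw [hasSum_iff_tendsto_nat_of_nonneg]
  -- `T n` is the sum of the first `n` terms: `b * G n` up to `n = J + 1`, after which the
  -- increments are those of `-a * G`.
  · let T : ℕ → ℝ := fun j => if j ≤ J + 1 then b * potential k p j else
      (a + b) * potential k p (J + 1) - a * potential k p j
    have hstep : ∀ j : ℕ, negBinomPMF (k + 1) p (k + 1 + j) *
        linLinLoss a b ((k : ℝ) / ((k : ℝ) + j) / p) = T (j + 1) - T j := by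
      intro j
      have hid := pmf_mul_one_sub hk hp0.ne' j
      have hkj : (0 : ℝ) < (k : ℝ) + j := by positivity
      by_cases h : j ≤ J
      · have hx : 1 ≤ (k : ℝ) / ((k : ℝ) + j) / p := by
          rw [div_div, one_le_div (by positivity)]
          exact (hJ j).mp h
        have h1 : T (j + 1) = b * potential k p (j + 1) := if_pos (by omega)
        have h2 : T j = b * potential k p j := if_pos (by omega)
        rw [linLinLoss_of_ge a b hx, h1, h2]
        linear_combination (-b) * hid
      · have hx : (k : ℝ) / ((k : ℝ) + j) / p ≤ 1 := by
          rw [div_div, div_le_one (by positivity)]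
          exact (not_le.mp (mt (hJ j).mpr h)).le
        have h1 : T (j + 1) = (a + b) * potential k p (J + 1) - a * potential k p (j + 1) :=
          if_neg (by omega)
        have h2 : T j = (a + b) * potential k p (J + 1) - a * potential k p j := by
          rcases (show j = J + 1 ∨ J + 1 < j by omega) with rfl | h'
          · simp only [T, le_refl, if_true]
            ring
          · exact if_neg (by omega)
        rw [linLinLoss_of_le a b hx, h1, h2]
        linear_combination a * hid
    have hT0 : T 0 = 0 := by simp [T, potential_zero hk]
    have hsum : ∀ n : ℕ, ∑ j ∈ Finset.range n, negBinomPMF (k + 1) p (k + 1 + j) *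
        linLinLoss a b ((k : ℝ) / ((k : ℝ) + j) / p) = T n := by
      intro n
      rw [Finset.sum_congr rfl fun j _ => hstep j, Finset.sum_range_sub, hT0, sub_zero]
    simp_rw [hsum]
    have hlim := ((tendsto_potential k hp).const_mul a).const_sub ((a + b) * potential k p (J + 1))
    rw [mul_zero, sub_zero] at hlim
    refine hlim.congr' ?_
    filter_upwards [eventually_gt_atTop (J + 1)] with n hn
    exact (if_neg (by omega)).symm
  · intro j
    refine mul_nonneg ?_ (linLinLoss_nonneg ha hb _)
    have hq : 0 ≤ 1 - p := by linarith [hp.2]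
    unfold negBinomPMF
    positivity

theorem stmt4 (ν : ℕ) (hν : 2 ≤ ν) (a b : ℝ) (ha : 0 ≤ a) (hb : 0 ≤ b)
    (hab : (a, b) ≠ (0, 0)) (p : ℝ) (hp : p ∈ Set.Ioo (0 : ℝ) 1)
    (m₀ : ℕ) (hm₀ : m₀ = Nat.floor (((ν : ℝ) - 1) / p + 1)) :
    risk ν (linLinLoss a b) (fun n => ((ν : ℝ) - 1) / ((n : ℝ) - 1)) p =
      (a + b) * (1 - p) * (Nat.choose (m₀ - 1) (ν - 1) : ℝ) * p ^ (ν - 1) *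
        (1 - p) ^ (m₀ - ν) := by
  obtain ⟨k, rfl⟩ : ∃ k, ν = k + 1 := ⟨ν - 1, by omega⟩
  have hk : 1 ≤ k := by omega
  have hp0 := hp.1
  have hk0 : (0 : ℝ) < k := by exact_mod_cast hk
  have hcast : ((k + 1 : ℕ) : ℝ) - 1 = k := by push_cast; ring
  rw [hcast] at hm₀ ⊢
  have hfloor : ∀ j : ℕ, k + 1 + j ≤ m₀ ↔ ((k : ℝ) + j) * p ≤ k := by
    intro j
    rw [hm₀, Nat.le_floor_iff (by positivity), ← le_div_iff₀ hp0]
    push_cast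
    constructor <;> intro h <;> linarith
  obtain ⟨J, rfl⟩ : ∃ J, m₀ = k + 1 + J := by
    refine Nat.exists_eq_add_of_le ((hfloor 0).mpr ?_)
    push_cast
    nlinarith [hp.2]
  have hS := hasSum_risk_terms hk ha hb hp (J := J) fun j => by
    rw [← hfloor j]
    omega
  have hR : HasSum (fun n : ℕ => if k + 1 ≤ n then
      negBinomPMF (k + 1) p n * linLinLoss a b ((k : ℝ) / ((n : ℝ) - 1) / p) else 0)
      ((a + b) * potential k p (J + 1)) := by
    rw [← hasSum_nat_add_iff' (k + 1), Finset.sum_eq_zero, sub_zero]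
    · refine hS.congr_fun fun j => ?_
      rw [if_pos (by omega), add_comm j (k + 1)]
      congr 4
      push_cast
      ring
    · intro n hn
      exact if_neg (by simpa using hn)
  unfold risk
  rw [hR.tsum_eq, potential_succ, show k + 1 + J - 1 = k + J by omega,
    show k + 1 + J - (k + 1) = J by omega, Nat.add_sub_cancel]
  ring
end

section
/- Let ν ≥ 2 be an integer and a, b > 0. Define G(Ω) = bΩ γ(ν−1, Ω)/(ν−1) + (a−b) γ(ν, Ω) − aν γ(ν+1, Ω)/Ω + a(ν/Ω − 1) for Ω > 0. Then G is differentiable with G′(Ω) = b γ(ν−1, Ω)/(ν−1) − aν(1 − γ(ν+1, Ω))/Ω², which is strictly increasing in Ω; consequently there is a unique Ω* > 0 satisfying (Ω*)²/(ν(ν−1)) = a(1 − γ(ν+1, Ω*))/(b γ(ν−1, Ω*)), and Ω* is the unique global minimizer of G on (0,∞). -/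
/-!
Write `γ(t, u)` for `lowerGamma t u`. For `t ≥ 1` the integrand is continuous, so the fundamental
theorem of calculus gives `∂γ/∂u = u ^ (t - 1) e ^ (-u) / Γ(t)`; together with `γ(t, 0) = 0` and
`γ(t, u) → 1` as `u → ∞` this shows that `γ(t, ·)` increases strictly from `0` to `1`.

Differentiating `G`, the terms that come from derivatives of the `γ`'s cancel because
`Γ(ν) = (ν - 1) Γ(ν - 1)` and `Γ(ν + 1) = ν Γ(ν)`; what remains is the stated `G'`. It is strictly
increasing since `γ(ν - 1, Ω)` increases while both `1 - γ(ν + 1, Ω)` and `1 / Ω²` are positive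
and decrease. The equation for `Ω*` is `G'(Ω*) = 0` rearranged. A zero exists by the intermediate
value theorem applied to `Ω² G'(Ω)`, which extends continuously to `Ω = 0` with the value
`-aν < 0` and is positive for large `Ω` since `G' → b / (ν - 1)`. Strict monotonicity of `G'` makes
the zero unique and fixes the sign of `G'` on either side of it, so the zero is the strict global
minimizer.
-/

open Real Filter Set

/-- Normalized lower incomplete gamma function. -/
noncomputable def lowerGamma (t u : ℝ) : ℝ :=
  (∫ s in (0:ℝ)..u, s ^ (t - 1) * Real.exp (-s)) / Real.Gamma t

/-- Asymptotic risk under normalized inverse-linear loss, as a function of `Ω`. -/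
noncomputable def Gil (ν : ℕ) (a b Ω : ℝ) : ℝ :=
  b * Ω * lowerGamma ((ν : ℝ) - 1) Ω / ((ν : ℝ) - 1) +
    (a - b) * lowerGamma (ν : ℝ) Ω -
    a * (ν : ℝ) * lowerGamma ((ν : ℝ) + 1) Ω / Ω + a * ((ν : ℝ) / Ω - 1)

lemma continuous_integrand {t : ℝ} (ht : 1 ≤ t) :
    Continuous fun s : ℝ => s ^ (t - 1) * Real.exp (-s) :=
  (Real.continuous_rpow_const (by linarith)).mul (by fun_prop)

lemma hasDerivAt_lowerGamma {t : ℝ} (ht : 1 ≤ t) (u : ℝ) :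
    HasDerivAt (lowerGamma t) (u ^ (t - 1) * Real.exp (-u) / Real.Gamma t) u :=
  ((continuous_integrand ht).integral_hasStrictDerivAt 0 u).hasDerivAt.div_const _

lemma continuous_lowerGamma {t : ℝ} (ht : 1 ≤ t) : Continuous (lowerGamma t) :=
  continuous_iff_continuousAt.2 fun u => (hasDerivAt_lowerGamma ht u).continuousAt

lemma lowerGamma_zero (t : ℝ) : lowerGamma t 0 = 0 := by simp [lowerGamma]

lemma strictMonoOn_lowerGamma {t : ℝ} (ht : 1 ≤ t) : StrictMonoOn (lowerGamma t) (Ici 0) := by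
  apply strictMonoOn_of_deriv_pos (convex_Ici 0) (continuous_lowerGamma ht).continuousOn
  intro u hu
  rw [interior_Ici, mem_Ioi] at hu
  rw [(hasDerivAt_lowerGamma ht u).deriv]
  have := Real.Gamma_pos_of_pos (show 0 < t by linarith)
  positivity

lemma tendsto_lowerGamma {t : ℝ} (ht : 1 ≤ t) : Tendsto (lowerGamma t) atTop (nhds 1) := by
  have ht0 : 0 < t := by linarith
  have hΓ := Real.Gamma_pos_of_pos ht0
  have hint : MeasureTheory.IntegrableOn (fun s : ℝ => s ^ (t - 1) * Real.exp (-s)) (Ioi 0) := by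
    simpa only [mul_comm] using Real.GammaIntegral_convergent ht0
  have h := (MeasureTheory.intervalIntegral_tendsto_integral_Ioi 0 hint tendsto_id).div_const
    (Real.Gamma t)
  have he : ∫ s in Ioi (0 : ℝ), s ^ (t - 1) * Real.exp (-s) = Real.Gamma t := by
    rw [Real.Gamma_eq_integral ht0]
    simp only [mul_comm]
  rw [he, div_self hΓ.ne'] at h
  exact h

lemma lowerGamma_pos {t u : ℝ} (ht : 1 ≤ t) (hu : 0 < u) : 0 < lowerGamma t u := by
  simpa [lowerGamma_zero] using strictMonoOn_lowerGamma ht self_mem_Ici hu.le hu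

lemma lowerGamma_lt_one {t u : ℝ} (ht : 1 ≤ t) (hu : 0 < u) : lowerGamma t u < 1 := by
  have h1 : lowerGamma t u < lowerGamma t (u + 1) :=
    strictMonoOn_lowerGamma ht hu.le (mem_Ici.2 (by linarith)) (by linarith)
  refine h1.trans_le (ge_of_tendsto (tendsto_lowerGamma ht) ?_)
  filter_upwards [eventually_ge_atTop (u + 1)] with v hv
  exact (strictMonoOn_lowerGamma ht).monotoneOn (mem_Ici.2 (by linarith))
    (mem_Ici.2 (by linarith)) hv

/-- The derivative of `Gil ν a b`. -/
noncomputable def dGil (ν : ℕ) (a b Ω : ℝ) : ℝ :=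
  b * lowerGamma ((ν : ℝ) - 1) Ω / ((ν : ℝ) - 1) -
    a * (ν : ℝ) * (1 - lowerGamma ((ν : ℝ) + 1) Ω) / Ω ^ 2

lemma hasDerivAt_Gil {ν : ℕ} (hν : 2 ≤ ν) (a b : ℝ) {Ω : ℝ} (hΩ : 0 < Ω) :
    HasDerivAt (Gil ν a b) (dGil ν a b Ω) Ω := by
  have hn : (2 : ℝ) ≤ ν := by exact_mod_cast hν
  have h1 := hasDerivAt_lowerGamma (t := (ν : ℝ) - 1) (by linarith) Ω
  have h2 := hasDerivAt_lowerGamma (t := (ν : ℝ)) (by linarith) Ω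
  have h3 := hasDerivAt_lowerGamma (t := (ν : ℝ) + 1) (by linarith) Ω
  have hid := hasDerivAt_id Ω
  have hG := (((((hid.const_mul b).mul h1).div_const ((ν : ℝ) - 1)).add
    (h2.const_mul (a - b))).sub ((h3.const_mul (a * (ν : ℝ))).div hid hΩ.ne')).add
    ((((hasDerivAt_const Ω (ν : ℝ)).div hid hΩ.ne').sub_const 1).const_mul a)
  refine HasDerivAt.congr_deriv (f := Gil ν a b) hG ?_
  have hn1 : (ν : ℝ) - 1 ≠ 0 := by linarith
  have hn0 : (ν : ℝ) ≠ 0 := by linarith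
  have hΓ1 := (Real.Gamma_pos_of_pos (show 0 < (ν : ℝ) - 1 by linarith)).ne'
  have e1 : Real.Gamma (ν : ℝ) = ((ν : ℝ) - 1) * Real.Gamma ((ν : ℝ) - 1) := by
    simpa using Real.Gamma_add_one hn1
  have p1 : Ω ^ ((ν : ℝ) - 1) = Ω ^ ((ν : ℝ) - 1 - 1) * Ω := by
    rw [← Real.rpow_add_one hΩ.ne', sub_add_cancel]
  have p2 : Ω ^ ((ν : ℝ) + 1 - 1) = Ω ^ ((ν : ℝ) - 1 - 1) * Ω * Ω := by
    rw [← p1, ← Real.rpow_add_one hΩ.ne', sub_add_cancel, add_sub_cancel_right]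
  rw [Real.Gamma_add_one hn0, e1, p1, p2, dGil]
  simp only [id]
  generalize Ω ^ ((ν : ℝ) - 1 - 1) = P
  field_simp
  ring

lemma strictMonoOn_dGil {ν : ℕ} (hν : 2 ≤ ν) {a b : ℝ} (ha : 0 < a) (hb : 0 < b) :
    StrictMonoOn (dGil ν a b) (Ioi 0) := by
  have hn : (2 : ℝ) ≤ ν := by exact_mod_cast hν
  intro x hx y hy hxy
  rw [mem_Ioi] at hx hy
  have hn1 : 0 < (ν : ℝ) - 1 := by linarith
  have g1 : lowerGamma ((ν : ℝ) - 1) x < lowerGamma ((ν : ℝ) - 1) y :=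
    strictMonoOn_lowerGamma (by linarith) hx.le hy.le hxy
  have g2 : lowerGamma ((ν : ℝ) + 1) x < lowerGamma ((ν : ℝ) + 1) y :=
    strictMonoOn_lowerGamma (by linarith) hx.le hy.le hxy
  have l1 : lowerGamma ((ν : ℝ) + 1) x < 1 := lowerGamma_lt_one (by linarith) hx
  have A : b * lowerGamma ((ν : ℝ) - 1) x / ((ν : ℝ) - 1) <
      b * lowerGamma ((ν : ℝ) - 1) y / ((ν : ℝ) - 1) := by gcongr
  have l1' : 0 ≤ 1 - lowerGamma ((ν : ℝ) + 1) x := by linarith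
  have B : a * (ν : ℝ) * (1 - lowerGamma ((ν : ℝ) + 1) y) / y ^ 2 ≤
      a * (ν : ℝ) * (1 - lowerGamma ((ν : ℝ) + 1) x) / x ^ 2 := by gcongr
  unfold dGil
  linarith

lemma critical_iff {ν : ℕ} (hν : 2 ≤ ν) {a b : ℝ} (hb : 0 < b) {Ω : ℝ}
    (hΩ : 0 < Ω) :
    Ω ^ 2 / ((ν : ℝ) * ((ν : ℝ) - 1)) =
      a * (1 - lowerGamma ((ν : ℝ) + 1) Ω) / (b * lowerGamma ((ν : ℝ) - 1) Ω) ↔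
    dGil ν a b Ω = 0 := by
  have hn : (2 : ℝ) ≤ ν := by exact_mod_cast hν
  have hn1 : (ν : ℝ) - 1 ≠ 0 := by linarith
  have hn0 : (ν : ℝ) ≠ 0 := by linarith
  have hg : lowerGamma ((ν : ℝ) - 1) Ω ≠ 0 := (lowerGamma_pos (by linarith) hΩ).ne'
  rw [dGil, sub_eq_zero, div_eq_div_iff (by positivity) (by positivity),
    div_eq_div_iff hn1 (by positivity)]
  constructor <;> intro h <;> linear_combination h

lemma exists_dGil_eq_zero {ν : ℕ} (hν : 2 ≤ ν) {a b : ℝ} (ha : 0 < a) (hb : 0 < b) :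
    ∃ Ω : ℝ, 0 < Ω ∧ dGil ν a b Ω = 0 := by
  have hn : (2 : ℝ) ≤ ν := by exact_mod_cast hν
  have hn1 : 0 < (ν : ℝ) - 1 := by linarith
  have c1 := continuous_lowerGamma (t := (ν : ℝ) - 1) (by linarith)
  have c2 := continuous_lowerGamma (t := (ν : ℝ) + 1) (by linarith)
  -- `F Ω = Ω ^ 2 * dGil ν a b Ω` away from `0`, but `F` is continuous at `0` as well.
  let F : ℝ → ℝ := fun Ω => Ω ^ 2 * (b * lowerGamma ((ν : ℝ) - 1) Ω / ((ν : ℝ) - 1)) -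
    a * (ν : ℝ) * (1 - lowerGamma ((ν : ℝ) + 1) Ω)
  have hF : ∀ Ω : ℝ, 0 < Ω → F Ω = Ω ^ 2 * dGil ν a b Ω := by
    intro Ω hΩ
    simp only [F, dGil]
    field_simp
  have hFc : Continuous F := by fun_prop
  have hF0 : F 0 < 0 := by
    simp only [F, lowerGamma_zero]
    have : 0 < a * (ν : ℝ) := by positivity
    simpa using this
  have hlim : Tendsto (dGil ν a b) atTop (nhds (b * 1 / ((ν : ℝ) - 1) - 0)) := by
    refine (((tendsto_lowerGamma (by linarith)).const_mul b).div_const _).sub ?_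
    exact (((tendsto_lowerGamma (by linarith)).const_sub 1).const_mul _).div_atTop
      (tendsto_pow_atTop two_ne_zero)
  have hpos : 0 < b * 1 / ((ν : ℝ) - 1) - 0 := by
    rw [sub_zero]
    positivity
  obtain ⟨M, hM, hM0⟩ := ((hlim.eventually (lt_mem_nhds hpos)).and (eventually_gt_atTop 0)).exists
  have hFM : 0 < F M := by
    rw [hF M hM0]
    positivity
  obtain ⟨Ω, hΩ, h0⟩ := intermediate_value_Ioo hM0.le hFc.continuousOn ⟨hF0, hFM⟩
  refine ⟨Ω, hΩ.1, ?_⟩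
  rw [hF Ω hΩ.1] at h0
  exact (mul_eq_zero.1 h0).resolve_left (pow_pos hΩ.1 2).ne'

lemma Gil_lt_of_critical {ν : ℕ} (hν : 2 ≤ ν) {a b : ℝ} (ha : 0 < a) (hb : 0 < b) {Ωs Ω : ℝ}
    (hs : 0 < Ωs) (h0 : dGil ν a b Ωs = 0) (hΩ : 0 < Ω) (hne : Ω ≠ Ωs) :
    Gil ν a b Ωs < Gil ν a b Ω := by
  have hmono := strictMonoOn_dGil hν ha hb
  have hcont : ∀ x : ℝ, 0 < x → ContinuousAt (Gil ν a b) x := fun x hx =>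
    (hasDerivAt_Gil hν a b hx).continuousAt
  rcases hne.lt_or_gt with h | h
  · have hanti : StrictAntiOn (Gil ν a b) (Icc Ω Ωs) := by
      apply strictAntiOn_of_deriv_neg (convex_Icc _ _)
      · exact fun x hx => (hcont x (hΩ.trans_le hx.1)).continuousWithinAt
      · intro x hx
        rw [interior_Icc] at hx
        have hx0 : 0 < x := hΩ.trans hx.1
        rw [(hasDerivAt_Gil hν a b hx0).deriv, ← h0]
        exact hmono hx0 hs hx.2
    exact hanti ⟨le_rfl, h.le⟩ ⟨h.le, le_rfl⟩ h
  · have hinc : StrictMonoOn (Gil ν a b) (Icc Ωs Ω) := by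
      apply strictMonoOn_of_deriv_pos (convex_Icc _ _)
      · exact fun x hx => (hcont x (hs.trans_le hx.1)).continuousWithinAt
      · intro x hx
        rw [interior_Icc] at hx
        have hx0 : 0 < x := hs.trans hx.1
        rw [(hasDerivAt_Gil hν a b hx0).deriv, ← h0]
        exact hmono hs hx0 hx.1
    exact hinc ⟨le_rfl, h.le⟩ ⟨h.le, le_rfl⟩ h

theorem stmt10 (ν : ℕ) (hν : 2 ≤ ν) (a b : ℝ) (ha : 0 < a) (hb : 0 < b) :
    (∀ Ω : ℝ, 0 < Ω →
        HasDerivAt (Gil ν a b)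
          (b * lowerGamma ((ν : ℝ) - 1) Ω / ((ν : ℝ) - 1) -
            a * (ν : ℝ) * (1 - lowerGamma ((ν : ℝ) + 1) Ω) / Ω ^ 2) Ω) ∧
      StrictMonoOn
        (fun Ω : ℝ => b * lowerGamma ((ν : ℝ) - 1) Ω / ((ν : ℝ) - 1) -
          a * (ν : ℝ) * (1 - lowerGamma ((ν : ℝ) + 1) Ω) / Ω ^ 2)
        (Set.Ioi 0) ∧
      (∃! Ωs : ℝ, 0 < Ωs ∧
        Ωs ^ 2 / ((ν : ℝ) * ((ν : ℝ) - 1)) =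
          a * (1 - lowerGamma ((ν : ℝ) + 1) Ωs) / (b * lowerGamma ((ν : ℝ) - 1) Ωs)) ∧
      ∀ Ωs : ℝ, 0 < Ωs →
        Ωs ^ 2 / ((ν : ℝ) * ((ν : ℝ) - 1)) =
          a * (1 - lowerGamma ((ν : ℝ) + 1) Ωs) / (b * lowerGamma ((ν : ℝ) - 1) Ωs) →
        ∀ Ω : ℝ, 0 < Ω → Ω ≠ Ωs → Gil ν a b Ωs < Gil ν a b Ω := by
  refine ⟨fun Ω hΩ => hasDerivAt_Gil hν a b hΩ, strictMonoOn_dGil hν ha hb, ?_, ?_⟩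
  · obtain ⟨Ω, hΩ, h0⟩ := exists_dGil_eq_zero hν ha hb
    refine ⟨Ω, ⟨hΩ, (critical_iff hν hb hΩ).2 h0⟩, ?_⟩
    rintro y ⟨hy, hy0⟩
    exact (strictMonoOn_dGil hν ha hb).injOn hy hΩ
      (((critical_iff hν hb hy).1 hy0).trans h0.symm)
  · intro Ωs hs hcrit Ω hΩ hne
    exact Gil_lt_of_critical hν ha hb hs ((critical_iff hν hb hs).1 hcrit) hΩ hne
end
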